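/- Taylor expansion commutes with substitutions: for all λμ-terms M, N, variable x and names α, β: (1) T(M{α/β}) = T(M){α/β} (renaming applied elementwise); (2) T(M{N/x}) = ⋃_{t∈T(M)} ⋃_{[ū] finite multiset of elements of T(N)} t⟨[ū]/x⟩; (3) T((M)_α N) = ⋃_{t∈T(M)} ⋃_{[ū] finite multiset of elements of T(N)} ⟨t⟩_α[ū], where the unions of sums are taken as unions of the underlying sets of resource terms. -/

import Mathlib

/-!
All three identities are proved by induction on `M`, both sides being computed by the same clauses.
Parts (2) and (3) have the shape `Taylor (f M) = spread F (Taylor M) (Taylor N)`, where `spread F A B`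
collects the summands of `F t bag` for `t ∈ A` and `bag` a list over `B`.

The only clause with content is application, where the resources in the bag are distributed between
the head and the arguments. Since membership in `Taylor N` is a condition on each resource
separately, it passes from a list to the parts of any of its splittings (`mem_of_mem_splits`,
`mem_of_mem_splits2`); conversely, any family of lists over `Taylor N` is a splitting of its
concatenation (`mem_splits_flatten`, `mem_splits2_append`). Hence choosing one bag and distributing
it is the same as choosing a bag independently for every subterm (`spread_app`). The clause
`μg.[a]M` of named application uses the same argument for splittings in two parts.
-/

set_option maxHeartbeats 1000000

namespace RLMu

inductive Rt : Type where
  | var : ℕ → Rt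
  | lam : ℕ → Rt → Rt
  | app : Rt → List Rt → Rt
  | mu  : ℕ → ℕ → Rt → Rt

noncomputable instance : DecidableEq Rt := Classical.decEq _

namespace Rt

mutual
  def renameN (a b : ℕ) : Rt → Rt
    | var y => var y
    | lam y t => lam y (renameN a b t)
    | app t ts => app (renameN a b t) (renameNBag a b ts)
    | mu g e t =>
        if g = b then mu g e t
        else mu g (if e = b then a else e) (renameN a b t)
  def renameNBag (a b : ℕ) : List Rt → List Rt
    | [] => []
    | t :: ts => renameN a b t :: renameNBag a b ts
end

def modifyIdx (t : Rt) : List (List Rt) → ℕ → List (List Rt)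
  | [], _ => []
  | l :: ls, 0 => (t :: l) :: ls
  | l :: ls, i + 1 => l :: modifyIdx t ls i

def splits (n : ℕ) : List Rt → Multiset (List (List Rt))
  | [] => {List.replicate n []}
  | t :: ts => (splits n ts).bind fun ls => (Multiset.range n).map fun i => modifyIdx t ls i

def splits2 : List Rt → Multiset (List Rt × List Rt)
  | [] => {([], [])}
  | t :: ts => (splits2 ts).bind fun p => {(t :: p.1, p.2), (p.1, t :: p.2)}

-- the (quantitative) linear substitution t⟨[ū]/x⟩ : the sum over all ways of
-- assigning the elements of the bag bijectively to the free occurrences of x in t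
mutual
  def linSub (x : ℕ) : Rt → List Rt → Multiset Rt
    | var y, bag =>
        if y = x then (match bag with | [u] => ({u} : Multiset Rt) | _ => 0)
        else (match bag with | [] => ({var y} : Multiset Rt) | _ => 0)
    | lam y t, bag =>
        if y = x then (match bag with | [] => ({lam y t} : Multiset Rt) | _ => 0)
        else (linSub x t bag).map (lam y)
    | mu g e t, bag => (linSub x t bag).map (mu g e)
    | app t ts, bag =>
        (splits (ts.length + 1) bag).bind fun ls =>
          match ls with
          | l0 :: rest =>
              (linSub x t l0).bind fun s =>
                (linSubBag x ts rest).map fun ss => app s ss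
          | [] => 0
  def linSubBag (x : ℕ) : List Rt → List (List Rt) → Multiset (List Rt)
    | [], [] => {([] : List Rt)}
    | [], _ :: _ => 0
    | _ :: _, [] => 0
    | t :: ts, l :: ls =>
        (linSub x t l).bind fun s => (linSubBag x ts ls).map fun ss => s :: ss
end

end Rt

end RLMu

namespace RLMu
namespace Rt

-- the (quantitative) linear named application ⟨t⟩_a[ū]
mutual
  def nApp (a : ℕ) : Rt → List Rt → Multiset Rt
    | var y, bag => (match bag with | [] => ({var y} : Multiset Rt) | _ => 0)
    | lam y t, bag => (nApp a t bag).map (lam y)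
    | mu g e t, bag =>
        if g = a then (match bag with | [] => ({mu g e t} : Multiset Rt) | _ => 0)
        else if e = a then
          (splits2 bag).bind fun p =>
            (nApp a t p.1).map fun s => mu g e (app s p.2)
        else (nApp a t bag).map (mu g e)
    | app t ts, bag =>
        (splits (ts.length + 1) bag).bind fun ls =>
          match ls with
          | l0 :: rest =>
              (nApp a t l0).bind fun s =>
                (nAppBag a ts rest).map fun ss => app s ss
          | [] => 0
  def nAppBag (a : ℕ) : List Rt → List (List Rt) → Multiset (List Rt)
    | [], [] => {([] : List Rt)}
    | [], _ :: _ => 0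
    | _ :: _, [] => 0
    | t :: ts, l :: ls =>
        (nApp a t l).bind fun s => (nAppBag a ts ls).map fun ss => s :: ss
end

mutual
  def degName (a : ℕ) : Rt → ℕ
    | var _ => 0
    | lam _ t => degName a t
    | app t ts => degName a t + degNameBag a ts
    | mu g e t => if g = a then 0 else (if e = a then 1 else 0) + degName a t
  def degNameBag (a : ℕ) : List Rt → ℕ
    | [] => 0
    | t :: ts => degName a t + degNameBag a ts
end

/-- the linear named application `⟨[e]t⟩_g [ū]` on the named term `[e]t`, a named
term `[e']t'` being represented by the pair `(e', t')` -/
def nAppNamed (g e : ℕ) (t : Rt) (bag : List Rt) : Multiset (ℕ × Rt) :=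
  if e = g then
    (splits2 bag).bind fun p => (nApp g t p.1).map fun s => (g, app s p.2)
  else (nApp g t bag).map fun s => (e, s)

/-- `μa.⟨[b]t⟩_a [ū]`, the reduct of the μ-redex `(μa.[b]t)[ū]` -/
def muRedex (a b : ℕ) (t : Rt) (bag : List Rt) : Multiset Rt :=
  if b = a then
    (splits2 bag).bind fun p => (nApp a t p.1).map fun s => mu a a (app s p.2)
  else (nApp a t bag).map (mu a b)

end Rt

open Rt

/-- base step of the λʳ-reduction -/
inductive BaseLam : Rt → Multiset Rt → Prop
  | step (x : ℕ) (t : Rt) (bag : List Rt) :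
      BaseLam (.app (.lam x t) bag) (linSub x t bag)

/-- base step of the μʳ-reduction -/
inductive BaseMu : Rt → Multiset Rt → Prop
  | step (a b : ℕ) (t : Rt) (bag : List Rt) :
      BaseMu (.app (.mu a b t) bag) (muRedex a b t bag)

/-- base step of the ρʳ-reduction -/
inductive BaseRho : Rt → Multiset Rt → Prop
  | step (g a b e : ℕ) (t : Rt) :
      BaseRho (.mu g a (.mu b e t))
        ({.mu g (if e = b then a else e) (renameN a b t)} : Multiset Rt)

/-- closure of a base reduction under single-hole resource contexts -/
inductive Ctx (B : Rt → Multiset Rt → Prop) : Rt → Multiset Rt → Prop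
  | base {t S} : B t S → Ctx B t S
  | lam (x : ℕ) {t S} : Ctx B t S → Ctx B (.lam x t) (S.map (.lam x))
  | mu (a b : ℕ) {t S} : Ctx B t S → Ctx B (.mu a b t) (S.map (.mu a b))
  | appL (bag : List Rt) {t S} :
      Ctx B t S → Ctx B (.app t bag) (S.map fun s => .app s bag)
  | appR (t : Rt) (l r : List Rt) {u S} :
      Ctx B u S → Ctx B (.app t (l ++ u :: r)) (S.map fun s => .app t (l ++ s :: r))

/-- the quantitative resource reduction →ᵣ⁺ from terms to sums in ℕ⟨λμʳ⟩ -/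
def QStep : Rt → Multiset Rt → Prop :=
  Ctx fun t S => BaseLam t S ∨ BaseMu t S ∨ BaseRho t S

/-- the quantitative resource reduction →ᵣ⁺ on sums of ℕ⟨λμʳ⟩ -/
inductive QRed : Multiset Rt → Multiset Rt → Prop
  | mk {t : Rt} {S R : Multiset Rt} : QStep t S → QRed (t ::ₘ R) (S + R)

/-- the qualitative version (with idempotent sum, i.e. with sums in 2⟨λμʳ⟩)
of the contextual closure of a base reduction: from terms to sums in 2⟨λμʳ⟩ -/
noncomputable def StepOf (B : Rt → Multiset Rt → Prop) (t : Rt) (T : Finset Rt) : Prop :=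
  ∃ S : Multiset Rt, Ctx B t S ∧ T = S.toFinset

/-- the reduction →_{λʳ} : contextual closure of the λʳ base step, in 2⟨λμʳ⟩ -/
noncomputable def StepLam : Rt → Finset Rt → Prop := StepOf BaseLam
/-- the reduction →_{μʳ} : contextual closure of the μʳ base step, in 2⟨λμʳ⟩ -/
noncomputable def StepMu : Rt → Finset Rt → Prop := StepOf BaseMu
/-- the reduction →_{ρʳ} : contextual closure of the ρʳ base step, in 2⟨λμʳ⟩ -/
noncomputable def StepRho : Rt → Finset Rt → Prop := StepOf BaseRho

/-- the resource reduction →ᵣ from terms to sums in 2⟨λμʳ⟩ -/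
noncomputable def RStep (t : Rt) (T : Finset Rt) : Prop :=
  ∃ S : Multiset Rt, QStep t S ∧ T = S.toFinset

/-- the resource reduction →ᵣ on sums in 2⟨λμʳ⟩ -/
inductive FRed : Finset Rt → Finset Rt → Prop
  | mk {t : Rt} {R S : Finset Rt} : RStep t S → t ∉ R → FRed (insert t R) (S ∪ R)

/-- a resource term is →ᵣ-normal -/
def NormalTm (t : Rt) : Prop := ∀ S : Multiset Rt, ¬ QStep t S

end RLMu

namespace RLMu
namespace Rt

-- number of μ-abstractions occurring in a term
mutual
  def degMu : Rt → ℕ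
    | var _ => 0
    | lam _ t => degMu t
    | mu _ _ t => degMu t + 1
    | app t ts => degMu t + degMuBag ts
  def degMuBag : List Rt → ℕ
    | [] => 0
    | t :: ts => degMu t + degMuBag ts
end

-- the multiset of the depths (number of enclosing named subterms) of the
-- occurrences of bags in a term
mutual
  def depths : Rt → Multiset ℕ
    | var _ => 0
    | lam _ t => depths t
    | mu _ _ t => (depths t).map (· + 1)
    | app t ts => (0 : ℕ) ::ₘ (depths t + depthsBag ts)
  def depthsBag : List Rt → Multiset ℕ
    | [] => 0
    | t :: ts => depths t + depthsBag ts
end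

/-- the multiset measure `m(t)` : the multiset of `deg_μ(t) - d_t(b)` over the
occurrences `b` of bags in `t` -/
def msr (t : Rt) : Multiset ℕ := (depths t).map fun d => degMu t - d

end Rt

/-- the (Dershowitz–Manna) multiset order on finite multisets of naturals -/
def MLT (M N : Multiset ℕ) : Prop :=
  ∃ X Y Z : Multiset ℕ, X ≠ 0 ∧ N = Z + X ∧ M = Z + Y ∧ ∀ y ∈ Y, ∃ x ∈ X, y < x

/-- the measure `SN(t) = (m(t), deg_μ(t))` -/
def SNm (t : Rt) : Multiset ℕ × ℕ := (Rt.msr t, Rt.degMu t)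

/-- lexicographic order on `!ℕ × ℕ` (multiset order on the first component) -/
def SNlt : Multiset ℕ × ℕ → Multiset ℕ × ℕ → Prop := Prod.Lex MLT (· < ·)

end RLMu

namespace RLMu

/-- λμ-terms. `mu a b M` denotes `μa.[b]M`. -/
inductive Lt : Type where
  | var : ℕ → Lt
  | lam : ℕ → Lt → Lt
  | app : Lt → Lt → Lt
  | mu  : ℕ → ℕ → Lt → Lt
  deriving DecidableEq

namespace Lt

/-- substitution `M{N/x}` -/
def subst (x : ℕ) (N : Lt) : Lt → Lt
  | var y => if y = x then N else var y
  | lam y M => if y = x then lam y M else lam y (subst x N M)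
  | app M P => app (subst x N M) (subst x N P)
  | mu a b M => mu a b (subst x N M)

/-- renaming `M{a/b}` of the free occurrences of the name `b` by `a` -/
def renameL (a b : ℕ) : Lt → Lt
  | var y => var y
  | lam y M => lam y (renameL a b M)
  | app M P => app (renameL a b M) (renameL a b P)
  | mu g e M =>
      if g = b then mu g e M
      else mu g (if e = b then a else e) (renameL a b M)

/-- the named application `(M)_a N` -/
def napp (a : ℕ) (N : Lt) : Lt → Lt
  | var y => var y
  | lam y M => lam y (napp a N M)
  | app M P => app (napp a N M) (napp a N P)
  | mu g e M =>
      if g = a then mu g e M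
      else if e = a then mu g e (app (napp a N M) N)
      else mu g e (napp a N M)

end Lt

open Lt

/-- base steps of the λμ-reduction: λ, μ and ρ -/
inductive LBase : Lt → Lt → Prop
  | lamStep (x : ℕ) (M N : Lt) : LBase (.app (.lam x M) N) (subst x N M)
  | muStep (a b : ℕ) (M N : Lt) :
      LBase (.app (.mu a b M) N)
        (if b = a then .mu a a (.app (napp a N M) N) else .mu a b (napp a N M))
  | rhoStep (g a b e : ℕ) (M : Lt) :
      LBase (.mu g a (.mu b e M)) (.mu g (if e = b then a else e) (renameL a b M))

/-- the λμ-reduction → : contextual closure of the base steps -/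
inductive LStep : Lt → Lt → Prop
  | base {M N} : LBase M N → LStep M N
  | lam (x : ℕ) {M N} : LStep M N → LStep (.lam x M) (.lam x N)
  | mu (a b : ℕ) {M N} : LStep M N → LStep (.mu a b M) (.mu a b N)
  | appL (P : Lt) {M N} : LStep M N → LStep (.app M P) (.app N P)
  | appR (P : Lt) {M N} : LStep M N → LStep (.app P M) (.app P N)

/-- the λμρ-equivalence `=_{λμρ}` generated by the λμ-reduction -/
inductive LEquiv : Lt → Lt → Prop
  | step {M N} : LStep M N → LEquiv M N
  | refl (M) : LEquiv M M
  | symm {M N} : LEquiv M N → LEquiv N M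
  | trans {M N P} : LEquiv M N → LEquiv N P → LEquiv M P

/-- the (qualitative) Taylor expansion -/
def Taylor : Lt → Set Rt
  | .var x => {Rt.var x}
  | .lam x M => Rt.lam x '' Taylor M
  | .mu a b M => Rt.mu a b '' Taylor M
  | .app M N =>
      {r | ∃ s ∈ Taylor M, ∃ bag : List Rt, (∀ u ∈ bag, u ∈ Taylor N) ∧ r = Rt.app s bag}

/-- the set `nf(t)` of the addends of the (unique) →ᵣ-normal form of a resource
term `t` : the →ᵣ-normal resource terms appearing in some sum reachable from `t` -/
def NFof (t : Rt) : Set Rt :=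
  {s | NormalTm s ∧ ∃ T : Finset Rt, Relation.ReflTransGen FRed {t} T ∧ s ∈ T}

/-- `NT(M)`, the normal form of the Taylor expansion of `M` -/
def NT (M : Lt) : Set Rt := ⋃ t ∈ Taylor M, NFof t

/-- λμ-contexts with `n` holes (each hole may occur any number of times) -/
inductive Ctxt (n : ℕ) : Type where
  | hole : Fin n → Ctxt n
  | var : ℕ → Ctxt n
  | lam : ℕ → Ctxt n → Ctxt n
  | app : Ctxt n → Ctxt n → Ctxt n
  | mu  : ℕ → ℕ → Ctxt n → Ctxt n

/-- filling the holes of a context with terms -/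
def fill {n : ℕ} : Ctxt n → (Fin n → Lt) → Lt
  | .hole i, f => f i
  | .var x, _ => .var x
  | .lam x C, f => .lam x (fill C f)
  | .app C D, f => .app (fill C f) (fill D f)
  | .mu a b C, f => .mu a b (fill C f)

/-- head reduction on λμ-terms (`none` iff the term is a head normal form):
first the leftmost ρ-redex in the head, otherwise the head redex -/
def headRed : Lt → Option Lt
  | .var _ => none
  | .lam x M => (headRed M).map (.lam x)
  | .mu g a (.mu b e M) => some (.mu g (if e = b then a else e) (renameL a b M))
  | .mu g a M => (headRed M).map (.mu g a)
  | .app (.lam x P) N => some (subst x N P)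
  | .app (.mu a b P) N =>
      some (if b = a then .mu a a (.app (napp a N P) N) else .mu a b (napp a N P))
  | .app M N => (headRed M).map (fun M' => .app M' N)

/-- `M` is a head normal form -/
def IsHnf (M : Lt) : Prop := headRed M = none

/-- the `n`-fold iteration `Hⁿ` of head reduction (as a partial function) -/
def headRedIter : ℕ → Lt → Option Lt
  | 0, M => some M
  | n + 1, M => (headRed M).bind (headRedIter n)

/-- head reduction on resource λμ-terms (the empty sum if the term is a hnf) -/
def headRedR : Rt → Multiset Rt
  | .var _ => 0
  | .lam x t => (headRedR t).map (.lam x)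
  | .mu g a (.mu b e t) => {.mu g (if e = b then a else e) (Rt.renameN a b t)}
  | .mu g a t => (headRedR t).map (.mu g a)
  | .app (.lam x p) bag => Rt.linSub x p bag
  | .app (.mu a b p) bag => Rt.muRedex a b p bag
  | .app t bag => (headRedR t).map fun s => .app s bag

/-- iterated λ-abstraction `λz₁…zₙ.M` -/
def lams : List ℕ → Lt → Lt
  | [], M => M
  | x :: xs, M => .lam x (lams xs M)

/-- iterated application `M N₁ … Nₙ` -/
def apps : Lt → List Lt → Lt
  | M, [] => M
  | M, N :: Ns => apps (.app M N) Ns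

/-- an upper bound for the variables occurring in a term -/
def varBound : Lt → ℕ
  | .var x => x + 1
  | .lam x M => max (x + 1) (varBound M)
  | .app M N => max (varBound M) (varBound N)
  | .mu _ _ M => varBound M

/-- `True := λxy.x` -/
def TrueT : Lt := .lam 0 (.lam 1 (.var 0))
/-- `False := λxy.y` -/
def FalseT : Lt := .lam 0 (.lam 1 (.var 1))
/-- the pair `⟨M,N⟩ := λz.zMN` (with `z` fresh) -/
def pairT (M N : Lt) : Lt :=
  let z := max (varBound M) (varBound N)
  .lam z (.app (.app (.var z) M) N)
/-- `Ω := (λx.xx)(λx.xx)` -/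
def Omega : Lt := .app (.lam 0 (.app (.var 0) (.var 0))) (.lam 0 (.app (.var 0) (.var 0)))

/-- the λμ-theory `≡_τ` equating terms with the same normal form of the Taylor
expansion -/
def Teq (M N : Lt) : Prop := NT M = NT N

end RLMu

namespace RLMu

namespace Rt

/-- The summands of `F t bag`, for `t` in `A` and `bag` a list of elements of `B`. -/
def spread (F : Rt → List Rt → Multiset Rt) (A B : Set Rt) : Set Rt :=
  {s | ∃ t ∈ A, ∃ bag : List Rt, (∀ u ∈ bag, u ∈ B) ∧ s ∈ F t bag}

/-- The pointwise extension of `F` to a list of terms, each with its own bag; it is zero when the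
two lists have different lengths. It is the common form of `linSubBag` and `nAppBag`. -/
def bagExt (F : Rt → List Rt → Multiset Rt) : List Rt → List (List Rt) → Multiset (List Rt)
  | [], [] => {([] : List Rt)}
  | [], _ :: _ => 0
  | _ :: _, [] => 0
  | t :: ts, l :: ls => (F t l).bind fun s => (bagExt F ts ls).map fun ss => s :: ss

theorem linSubBag_eq_bagExt (x : ℕ) (ts : List Rt) (ls : List (List Rt)) :
    linSubBag x ts ls = bagExt (linSub x) ts ls := by
  induction ts generalizing ls with
  | nil => cases ls <;> simp [linSubBag, bagExt]
  | cons t ts ih => cases ls <;> simp [linSubBag, bagExt, ih]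

theorem nAppBag_eq_bagExt (a : ℕ) (ts : List Rt) (ls : List (List Rt)) :
    nAppBag a ts ls = bagExt (nApp a) ts ls := by
  induction ts generalizing ls with
  | nil => cases ls <;> simp [nAppBag, bagExt]
  | cons t ts ih => cases ls <;> simp [nAppBag, bagExt, ih]

theorem renameNBag_eq_map (a b : ℕ) (ts : List Rt) :
    renameNBag a b ts = ts.map (renameN a b) := by
  induction ts with
  | nil => simp [renameNBag]
  | cons t ts ih => simp [renameNBag, ih]

/-! ### Splittings of a bag -/

theorem mem_of_mem_modifyIdx {t : Rt} {ls : List (List Rt)} {i : ℕ} {l : List Rt} {u : Rt}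
    (hl : l ∈ modifyIdx t ls i) (hu : u ∈ l) : u = t ∨ ∃ l' ∈ ls, u ∈ l' := by
  induction ls generalizing i with
  | nil => simp [modifyIdx] at hl
  | cons m ls ih =>
    cases i with
    | zero =>
      simp only [modifyIdx, List.mem_cons] at hl
      rcases hl with rfl | hl
      · rcases List.mem_cons.1 hu with h | h
        · exact .inl h
        · exact .inr ⟨m, by simp, h⟩
      · exact .inr ⟨l, by simp [hl], hu⟩
    | succ i =>
      simp only [modifyIdx, List.mem_cons] at hl
      rcases hl with rfl | hl
      · exact .inr ⟨l, by simp, hu⟩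
      · rcases ih hl with h | ⟨l', h, h'⟩
        · exact .inl h
        · exact .inr ⟨l', by simp [h], h'⟩

theorem mem_of_mem_splits {n : ℕ} {bag : List Rt} {ls : List (List Rt)} {l : List Rt} {u : Rt}
    (h : ls ∈ splits n bag) (hl : l ∈ ls) (hu : u ∈ l) : u ∈ bag := by
  induction bag generalizing ls l with
  | nil =>
    simp only [splits, Multiset.mem_singleton] at h
    subst h
    rw [List.eq_of_mem_replicate hl] at hu
    simp at hu
  | cons t ts ih =>
    simp only [splits, Multiset.mem_bind, Multiset.mem_map] at h
    obtain ⟨ms, hms, i, -, rfl⟩ := h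
    rcases mem_of_mem_modifyIdx hl hu with rfl | ⟨l', h, h'⟩
    · simp
    · exact List.mem_cons_of_mem _ (ih hms h h')

theorem cons_nil_mem_splits {n : ℕ} {bag : List Rt} {ls : List (List Rt)}
    (h : ls ∈ splits n bag) : ([] :: ls) ∈ splits (n + 1) bag := by
  induction bag generalizing ls with
  | nil => simp_all [splits, List.replicate_succ]
  | cons t ts ih =>
    simp only [splits, Multiset.mem_bind, Multiset.mem_map, Multiset.mem_range] at h ⊢
    obtain ⟨ms, hms, i, hi, rfl⟩ := h
    exact ⟨_, ih hms, i + 1, by omega, rfl⟩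

theorem mem_splits_flatten (ls : List (List Rt)) : ls ∈ splits ls.length ls.flatten := by
  induction ls with
  | nil => simp [splits]
  | cons l ls ih =>
    induction l with
    | nil => simpa using cons_nil_mem_splits ih
    | cons u l ihl =>
      simp only [List.flatten_cons, List.cons_append, splits, Multiset.mem_bind, Multiset.mem_map,
        Multiset.mem_range]
      exact ⟨l :: ls, by simpa using ihl, 0, by simp, rfl⟩

theorem mem_of_mem_splits2 {bag : List Rt} {p : List Rt × List Rt} {u : Rt}
    (h : p ∈ splits2 bag) (hu : u ∈ p.1 ∨ u ∈ p.2) : u ∈ bag := by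
  induction bag generalizing p with
  | nil => simp_all [splits2]
  | cons t ts ih =>
    simp only [splits2, Multiset.mem_bind, Multiset.insert_eq_cons, Multiset.mem_cons,
      Multiset.mem_singleton] at h
    obtain ⟨q, hq, rfl | rfl⟩ := h <;> have := ih hq <;> simp only [List.mem_cons] at hu ⊢ <;> tauto

theorem mem_splits2_append (l m : List Rt) : (l, m) ∈ splits2 (l ++ m) := by
  induction l with
  | nil =>
    induction m with
    | nil => simp [splits2]
    | cons u m ih =>
      simp only [List.nil_append, splits2, Multiset.mem_bind] at ih ⊢
      exact ⟨_, ih, by simp⟩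
  | cons u l ih =>
    simp only [List.cons_append, splits2, Multiset.mem_bind]
    exact ⟨_, ih, by simp⟩

/-! ### Choosing a bag for every subterm -/

/-- A list over `spread F P B` is obtained by choosing independently, for each of its entries, a term
of `P` and a bag over `B`. -/
theorem forall_mem_spread_iff {F : Rt → List Rt → Multiset Rt} {P B : Set Rt} {ss : List Rt} :
    (∀ s ∈ ss, s ∈ spread F P B) ↔
      ∃ ts : List Rt, ∃ ls : List (List Rt), (∀ t ∈ ts, t ∈ P) ∧ (∀ l ∈ ls, ∀ u ∈ l, u ∈ B) ∧
        ls.length = ts.length ∧ ss ∈ bagExt F ts ls := by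
  constructor
  · intro h
    induction ss with
    | nil => exact ⟨[], [], by simp, by simp, rfl, by simp [bagExt]⟩
    | cons s ss ih =>
      obtain ⟨ts, ls, h1, h2, h3, h4⟩ := ih fun r hr => h r (by simp [hr])
      obtain ⟨t, ht, l, hl, hs⟩ := h s (by simp)
      refine ⟨t :: ts, l :: ls, ?_, ?_, by simp [h3], ?_⟩
      · simpa using ⟨ht, h1⟩
      · simpa using ⟨hl, h2⟩
      · simp only [bagExt, Multiset.mem_bind, Multiset.mem_map]
        exact ⟨s, hs, ss, h4, rfl⟩
  · rintro ⟨ts, ls, h1, h2, -, h4⟩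
    induction ts generalizing ls ss with
    | nil => cases ls <;> simp_all [bagExt]
    | cons t ts ih =>
      cases ls with
      | nil => simp [bagExt] at h4
      | cons l ls =>
        simp only [bagExt, Multiset.mem_bind, Multiset.mem_map] at h4
        obtain ⟨s, hs, ss', hss', rfl⟩ := h4
        simp only [List.forall_mem_cons] at h1 h2 ⊢
        exact ⟨⟨t, h1.1, l, h2.1, hs⟩, ih ls h1.2 h2.2 hss'⟩

/-- If `F` distributes bags over the subterms of an application, then `spread F` commutes with the
application clause of the Taylor expansion. -/
theorem spread_app {F : Rt → List Rt → Multiset Rt} {A P B : Set Rt}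
    (hF : ∀ t ts bag r, r ∈ F (app t ts) bag ↔ ∃ l0 rest, l0 :: rest ∈ splits (ts.length + 1) bag ∧
      ∃ s ∈ F t l0, ∃ ss ∈ bagExt F ts rest, r = app s ss) :
    spread F {r | ∃ t ∈ A, ∃ ts : List Rt, (∀ u ∈ ts, u ∈ P) ∧ r = app t ts} B =
      {r | ∃ s ∈ spread F A B, ∃ ss : List Rt, (∀ u ∈ ss, u ∈ spread F P B) ∧ r = app s ss} := by
  ext r
  simp only [forall_mem_spread_iff]
  constructor
  · rintro ⟨_, ⟨t, ht, ts, hts, rfl⟩, bag, hbag, hr⟩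
    obtain ⟨l0, rest, hsp, s, hs, ss, hss, rfl⟩ := (hF _ _ _ _).1 hr
    have hlen : rest.length = ts.length := by
      clear hsp hr
      induction ts generalizing rest ss with
      | nil => cases rest <;> simp_all [bagExt]
      | cons t ts ih =>
        cases rest with
        | nil => simp [bagExt] at hss
        | cons l rest =>
          simp only [bagExt, Multiset.mem_bind, Multiset.mem_map] at hss
          obtain ⟨_, _, ss', hss', _⟩ := hss
          simp only [List.length_cons, ih (fun u hu => hts u (by simp [hu])) rest ss' hss']
    exact ⟨s, ⟨t, ht, l0, fun u hu => hbag u (mem_of_mem_splits hsp (by simp) hu), hs⟩, ss,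
      ⟨ts, rest, hts, fun l hl u hu => hbag u (mem_of_mem_splits hsp (by simp [hl]) hu), hlen, hss⟩,
      rfl⟩
  · rintro ⟨s, ⟨t, ht, l0, hl0, hs⟩, ss, ⟨ts, ls, hts, hls, hlen, hss⟩, rfl⟩
    refine ⟨app t ts, ⟨t, ht, ts, hts, rfl⟩, (l0 :: ls).flatten, ?_,
      (hF _ _ _ _).2 ⟨l0, ls, ?_, s, hs, ss, hss, rfl⟩⟩
    · intro u hu
      obtain ⟨l, hl, hul⟩ := List.mem_flatten.1 hu
      rcases List.mem_cons.1 hl with rfl | hl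
      · exact hl0 u hul
      · exact hls l hl u hul
    · simpa [hlen] using mem_splits_flatten (l0 :: ls)

/-- `spread F` commutes with a unary constructor `c` through which `F` passes. -/
theorem spread_image {F : Rt → List Rt → Multiset Rt} {A B : Set Rt} {c : Rt → Rt}
    (hF : ∀ t bag, F (c t) bag = (F t bag).map c) : spread F (c '' A) B = c '' spread F A B := by
  ext r
  constructor
  · rintro ⟨_, ⟨t, ht, rfl⟩, bag, hbag, hr⟩
    rw [hF, Multiset.mem_map] at hr
    obtain ⟨s, hs, rfl⟩ := hr
    exact ⟨s, ⟨t, ht, bag, hbag, hs⟩, rfl⟩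
  · rintro ⟨s, ⟨t, ht, bag, hbag, hs⟩, rfl⟩
    refine ⟨c t, ⟨t, ht, rfl⟩, bag, hbag, ?_⟩
    rw [hF]
    exact Multiset.mem_map_of_mem _ hs

/-- `spread F` fixes a set of terms to which `F` can attach no resource. -/
theorem spread_of_inert {F : Rt → List Rt → Multiset Rt} {A B : Set Rt}
    (hF : ∀ t ∈ A, ∀ bag s, s ∈ F t bag ↔ bag = [] ∧ s = t) : spread F A B = A := by
  ext r
  constructor
  · rintro ⟨t, ht, bag, -, hr⟩
    obtain ⟨-, rfl⟩ := (hF t ht _ _).1 hr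
    exact ht
  · exact fun hr => ⟨r, hr, [], by simp, (hF r hr _ _).2 ⟨rfl, rfl⟩⟩

theorem mem_linSub_app (x : ℕ) (t : Rt) (ts bag : List Rt) (r : Rt) :
    r ∈ linSub x (app t ts) bag ↔ ∃ l0 rest, l0 :: rest ∈ splits (ts.length + 1) bag ∧
      ∃ s ∈ linSub x t l0, ∃ ss ∈ bagExt (linSub x) ts rest, r = app s ss := by
  simp only [linSub, Multiset.mem_bind]
  constructor
  · rintro ⟨ls, hls, hr⟩
    cases ls with
    | nil => simp at hr
    | cons l0 rest =>
      simp only [Multiset.mem_bind, Multiset.mem_map, linSubBag_eq_bagExt] at hr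
      obtain ⟨s, hs, ss, hss, rfl⟩ := hr
      exact ⟨l0, rest, hls, s, hs, ss, hss, rfl⟩
  · rintro ⟨l0, rest, hls, s, hs, ss, hss, rfl⟩
    refine ⟨_, hls, ?_⟩
    simp only [Multiset.mem_bind, Multiset.mem_map, linSubBag_eq_bagExt]
    exact ⟨s, hs, ss, hss, rfl⟩

theorem mem_nApp_app (a : ℕ) (t : Rt) (ts bag : List Rt) (r : Rt) :
    r ∈ nApp a (app t ts) bag ↔ ∃ l0 rest, l0 :: rest ∈ splits (ts.length + 1) bag ∧
      ∃ s ∈ nApp a t l0, ∃ ss ∈ bagExt (nApp a) ts rest, r = app s ss := by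
  simp only [nApp, Multiset.mem_bind]
  constructor
  · rintro ⟨ls, hls, hr⟩
    cases ls with
    | nil => simp at hr
    | cons l0 rest =>
      simp only [Multiset.mem_bind, Multiset.mem_map, nAppBag_eq_bagExt] at hr
      obtain ⟨s, hs, ss, hss, rfl⟩ := hr
      exact ⟨l0, rest, hls, s, hs, ss, hss, rfl⟩
  · rintro ⟨l0, rest, hls, s, hs, ss, hss, rfl⟩
    refine ⟨_, hls, ?_⟩
    simp only [Multiset.mem_bind, Multiset.mem_map, nAppBag_eq_bagExt]
    exact ⟨s, hs, ss, hss, rfl⟩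

end Rt

/-! ### The three identities -/

theorem taylor_renameL (M : Lt) (a b : ℕ) :
    Taylor (Lt.renameL a b M) = Rt.renameN a b '' Taylor M := by
  induction M with
  | var y => simp [Lt.renameL, Taylor, Rt.renameN]
  | lam y M ih => simp [Lt.renameL, Taylor, ih, Set.image_image, Rt.renameN]
  | mu g e M ih =>
    by_cases hg : g = b
    · simp [Lt.renameL, Taylor, hg, Set.image_image, Rt.renameN]
    · simp [Lt.renameL, Taylor, ih, hg, Set.image_image, Rt.renameN]
  | app M P ihM ihP =>
    ext r
    simp only [Lt.renameL, Taylor, ihM, ihP]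
    constructor
    · rintro ⟨_, ⟨s, hs, rfl⟩, bag, hbag, rfl⟩
      obtain ⟨ts, rfl⟩ : bag ∈ Set.range (List.map fun p : Taylor P => Rt.renameN a b p) := by
        rw [Set.range_list_map]
        intro u hu
        obtain ⟨v, hv, rfl⟩ := hbag u hu
        exact ⟨⟨v, hv⟩, rfl⟩
      refine ⟨Rt.app s (ts.map Subtype.val), ⟨s, hs, _, ?_, rfl⟩, ?_⟩
      · simp +contextual
      · simp [Rt.renameN, Rt.renameNBag_eq_map]
    · rintro ⟨_, ⟨s, hs, ts, hts, rfl⟩, rfl⟩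
      refine ⟨_, ⟨s, hs, rfl⟩, ts.map (Rt.renameN a b), ?_, ?_⟩
      · intro u hu
        obtain ⟨v, hv, rfl⟩ := List.mem_map.1 hu
        exact ⟨v, hts v hv, rfl⟩
      · simp [Rt.renameN, Rt.renameNBag_eq_map]

theorem taylor_subst (M N : Lt) (x : ℕ) :
    Taylor (Lt.subst x N M) = Rt.spread (Rt.linSub x) (Taylor M) (Taylor N) := by
  induction M with
  | var y =>
    by_cases hy : y = x
    · subst hy
      ext r
      simp only [Lt.subst, Taylor, if_true, Rt.spread, Set.mem_singleton_iff, exists_eq_left,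
        Rt.linSub, Set.mem_ofPred_eq]
      constructor
      · exact fun hr => ⟨[r], by simpa using hr, by simp⟩
      · rintro ⟨bag, hbag, hr⟩
        rcases bag with _ | ⟨u, _ | ⟨v, bag⟩⟩ <;> simp_all
    · simp only [Lt.subst, if_neg hy, Taylor]
      refine (Rt.spread_of_inert ?_).symm
      rintro _ rfl bag s
      cases bag <;> simp [Rt.linSub, hy]
  | lam y M ih =>
    by_cases hy : y = x
    · simp only [Lt.subst, if_pos hy, Taylor]
      refine (Rt.spread_of_inert ?_).symm
      rintro _ ⟨t, -, rfl⟩ bag s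
      cases bag <;> simp [Rt.linSub, hy]
    · simp only [Lt.subst, if_neg hy, Taylor, ih]
      exact (Rt.spread_image fun t bag => by simp [Rt.linSub, hy]).symm
  | mu g e M ih =>
    simp only [Lt.subst, Taylor, ih]
    exact (Rt.spread_image fun t bag => by simp [Rt.linSub]).symm
  | app M P ihM ihP =>
    simp only [Lt.subst, Taylor, ihM, ihP]
    exact (Rt.spread_app (Rt.mem_linSub_app x)).symm

theorem taylor_napp (M N : Lt) (a : ℕ) :
    Taylor (Lt.napp a N M) = Rt.spread (Rt.nApp a) (Taylor M) (Taylor N) := by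
  induction M with
  | var y =>
    simp only [Lt.napp, Taylor]
    refine (Rt.spread_of_inert ?_).symm
    rintro _ rfl bag s
    cases bag <;> simp [Rt.nApp]
  | lam y M ih =>
    simp only [Lt.napp, Taylor, ih]
    exact (Rt.spread_image fun t bag => by simp [Rt.nApp]).symm
  | mu g e M ih =>
    by_cases hg : g = a
    · simp only [Lt.napp, if_pos hg, Taylor]
      refine (Rt.spread_of_inert ?_).symm
      rintro _ ⟨t, -, rfl⟩ bag s
      cases bag <;> simp [Rt.nApp, hg]
    · by_cases he : e = a
      · simp only [Lt.napp, if_neg hg, if_pos he, Taylor, ih]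
        ext r
        constructor
        · rintro ⟨_, ⟨s, ⟨t, ht, l, hl, hs⟩, m, hm, rfl⟩, rfl⟩
          refine ⟨_, ⟨t, ht, rfl⟩, l ++ m, ?_, ?_⟩
          · intro u hu
            exact (List.mem_append.1 hu).elim (hl u) (hm u)
          · simp only [Rt.nApp, if_neg hg, if_pos he, Multiset.mem_bind, Multiset.mem_map]
            exact ⟨(l, m), Rt.mem_splits2_append l m, s, hs, rfl⟩
        · rintro ⟨_, ⟨t, ht, rfl⟩, bag, hbag, hr⟩
          simp only [Rt.nApp, if_neg hg, if_pos he, Multiset.mem_bind, Multiset.mem_map] at hr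
          obtain ⟨p, hp, s, hs, rfl⟩ := hr
          exact ⟨_, ⟨s, ⟨t, ht, p.1, fun u hu => hbag u (Rt.mem_of_mem_splits2 hp (.inl hu)), hs⟩,
            p.2, fun u hu => hbag u (Rt.mem_of_mem_splits2 hp (.inr hu)), rfl⟩, rfl⟩
      · simp only [Lt.napp, if_neg hg, if_neg he, Taylor, ih]
        exact (Rt.spread_image fun t bag => by simp [Rt.nApp, hg, he]).symm
  | app M P ihM ihP =>
    simp only [Lt.napp, Taylor, ihM, ihP]
    exact (Rt.spread_app (Rt.mem_nApp_app a)).symm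

/-- Lemma 3.3: the Taylor expansion behaves well with respect to renaming,
substitution and named application. -/
theorem taylor_substitutions (M N : Lt) (x a b : ℕ) :
    (Taylor (Lt.renameL a b M) = Rt.renameN a b '' Taylor M) ∧
    (Taylor (Lt.subst x N M) =
      {s : Rt | ∃ t ∈ Taylor M, ∃ bag : List Rt,
        (∀ u ∈ bag, u ∈ Taylor N) ∧ s ∈ Rt.linSub x t bag}) ∧
    (Taylor (Lt.napp a N M) =
      {s : Rt | ∃ t ∈ Taylor M, ∃ bag : List Rt,
        (∀ u ∈ bag, u ∈ Taylor N) ∧ s ∈ Rt.nApp a t bag}) :=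
  ⟨taylor_renameL M a b, taylor_subst M N x, taylor_napp M N a⟩

end RLMu
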